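/- arXiv:1611.08768 — 2 statements merged into one kernel-verified Lean document; each statement's English description precedes it below -/
import Mathlib

section
/- Let φ be a plurisubharmonic function on an open set U ⊆ ℂⁿ, and suppose the closed Euclidean ball of radius R > 0 centered at a point a is contained in U. Then φ(a) ≤ (1/λ(B_R(a)))·∫_{B_R(a)} φ dλ, where B_R(a) is the open ball of radius R centered at a and λ is Lebesgue measure on ℂⁿ ≅ ℝ^{2n} (the integral takes values in [-∞,+∞)). In other words, every plurisubharmonic function satisfies the sub-mean-value inequality over balls, i.e. is subharmonic. -/
noncomputable section

open MeasureTheory ENNReal Metric Complex Filter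

/-! Lebesgue measure on `ℂⁿ ≅ ℝ^{2n}`, realized on `EuclideanSpace ℂ (Fin n)`. -/

instance (n : ℕ) : InnerProductSpace ℝ (EuclideanSpace ℂ (Fin n)) :=
  InnerProductSpace.complexToReal
instance (n : ℕ) : MeasurableSpace (EuclideanSpace ℂ (Fin n)) := borel _
instance (n : ℕ) : BorelSpace (EuclideanSpace ℂ (Fin n)) := ⟨rfl⟩

/-- The positive part of an extended real number, as an element of `ℝ≥0∞`. -/
def erealPos (t : EReal) : ℝ≥0∞ :=
  if t = ⊤ then ⊤ else ENNReal.ofReal t.toReal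

/-- The integral of an `EReal`-valued function: it equals `⊤` whenever the positive part
has infinite integral, and otherwise takes values in `[-∞, +∞)`, being `-∞` exactly when
the negative part has infinite integral. -/
def erealIntegral {α : Type*} [MeasurableSpace α] (μ : Measure α) (f : α → EReal) : EReal :=
  if ∫⁻ a, erealPos (f a) ∂μ = ⊤ then ⊤
  else (∫⁻ a, erealPos (f a) ∂μ).toEReal - (∫⁻ a, erealPos (-f a) ∂μ).toEReal

/-- A plurisubharmonic function on a subset `U ⊆ ℂⁿ`: an upper semicontinuous function
with values in `[-∞, +∞)` that is locally Lebesgue-integrable on `U` and satisfies the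
mean-value inequality `(φ ∘ γ)(0) ≤ (1/π) ∫_Δ (φ ∘ γ) dλ` for every holomorphic map
`γ : Δ → U` from the open unit disk `Δ ⊆ ℂ`. -/
structure PshOn {n : ℕ} (U : Set (EuclideanSpace ℂ (Fin n)))
    (φ : EuclideanSpace ℂ (Fin n) → EReal) : Prop where
  usc : UpperSemicontinuousOn φ U
  ne_top : ∀ x ∈ U, φ x ≠ ⊤
  locInt : ∀ x ∈ U, ∃ r > 0, ball x r ⊆ U ∧
    (∀ᵐ y ∂(volume.restrict (ball x r)), φ y ≠ ⊥) ∧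
    IntegrableOn (fun y => (φ y).toReal) (ball x r)
  meanValue : ∀ γ : ℂ → EuclideanSpace ℂ (Fin n),
    DifferentiableOn ℂ γ (ball 0 1) → Set.MapsTo γ (ball 0 1) U →
    φ (γ 0) ≤ ((Real.pi⁻¹ : ℝ) : EReal) *
      erealIntegral (volume.restrict (ball (0 : ℂ) 1)) (fun z => φ (γ z))

/-!
Let `f ≥ 0` be a constant minus `φ` on the closed ball, extended by `+∞`: it is lower
semicontinuous and dominates its mean over every affine disc in the ball. Dilating the ball about
its center by a complex factor `z` and integrating gives `Ψ z = ∫⁻ f (a + z (x - a))`. For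
fixed `x` the point `a + z (x - a)` runs over an affine disc, so by Fatou and Tonelli `Ψ` is lower
semicontinuous and dominates its means over discs in the unit disc; by the minimum principle it has
a minimum point `w` with `|w| = 1`. Multiplication by `w` preserves the measure, so
`∫⁻ f = Ψ w ≤ Ψ 0`, and `Ψ 0` is `f a` times the measure of the ball.
-/

section ExtendedIntegral

variable {α : Type*} [MeasurableSpace α] {μ : Measure α} {f g : α → EReal} {C : ℝ}

theorem erealPos_eq_toENNReal : erealPos = EReal.toENNReal := rfl

theorem erealIntegral_congr_ae (h : f =ᵐ[μ] g) : erealIntegral μ f = erealIntegral μ g := by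
  have hpos : ∫⁻ x, erealPos (f x) ∂μ = ∫⁻ x, erealPos (g x) ∂μ :=
    lintegral_congr_ae (h.fun_comp erealPos)
  have hneg : ∫⁻ x, erealPos (-f x) ∂μ = ∫⁻ x, erealPos (-g x) ∂μ :=
    lintegral_congr_ae (h.fun_comp fun t => erealPos (-t))
  unfold erealIntegral
  rw [hpos, hneg]

theorem toENNReal_sub_add_toENNReal (hC : 0 ≤ C) {t : EReal} (ht : t ≤ C) :
    ((C : EReal) - t).toENNReal + t.toENNReal = ENNReal.ofReal C + (-t).toENNReal := by
  induction t with
  | bot => simp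
  | top => simp at ht
  | coe t =>
    have htC : t ≤ C := mod_cast ht
    rw [← EReal.coe_sub, ← EReal.coe_neg]
    simp only [EReal.real_coe_toENNReal]
    rcases le_total 0 t with h | h
    · rw [ENNReal.ofReal_of_nonpos (neg_nonpos.2 h), ← ENNReal.ofReal_add (sub_nonneg.2 htC) h,
        sub_add_cancel, add_zero]
    · rw [ENNReal.ofReal_of_nonpos h, ← ENNReal.ofReal_add hC (neg_nonneg.2 h), add_zero,
        sub_eq_add_neg]

theorem coe_sub_coe_eq_of_add_eq_add {V : ℝ} {P N D : ℝ≥0∞} (hV : 0 ≤ V) (hP : P ≠ ⊤)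
    (h : D + P = ENNReal.ofReal V + N) : (P : EReal) - N = (V : EReal) - D := by
  lift P to NNReal using hP
  lift V to NNReal using hV
  rw [ENNReal.ofReal_coe_nnreal] at h
  induction N with
  | top =>
    obtain rfl : D = ⊤ := by simpa using h
    rfl
  | coe N =>
    lift D to NNReal using by rintro rfl; simp [← ENNReal.coe_add] at h
    have hreal : (D + P : ℝ) = V + N := mod_cast h
    have hsub : (P - N : ℝ) = V - D := by linarith only [hreal]
    exact congrArg ((↑) : ℝ → EReal) hsub

theorem erealIntegral_eq_sub_lintegral [IsFiniteMeasure μ] (hC : 0 ≤ C) (hf : AEMeasurable f μ)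
    (hfC : ∀ᵐ x ∂μ, f x ≤ C) :
    erealIntegral μ f =
      ((C * μ.real Set.univ : ℝ) : EReal) - (∫⁻ x, ((C : EReal) - f x).toENNReal ∂μ : ℝ≥0∞) := by
  have hpos : ∫⁻ x, (f x).toENNReal ∂μ ≠ ⊤ := by
    refine ne_top_of_le_ne_top
      (ENNReal.mul_ne_top (ofReal_ne_top (r := C)) (measure_ne_top μ Set.univ)) ?_
    rw [← lintegral_const]
    exact lintegral_mono_ae (hfC.mono fun x hx => EReal.toENNReal_le_toENNReal hx)
  have hsplit : ∫⁻ x, ((C : EReal) - f x).toENNReal ∂μ + ∫⁻ x, (f x).toENNReal ∂μ =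
      ENNReal.ofReal (C * μ.real Set.univ) + ∫⁻ x, (-f x).toENNReal ∂μ := by
    rw [← lintegral_add_right' _ hf.ereal_toENNReal,
      lintegral_congr_ae (hfC.mono fun x hx => toENNReal_sub_add_toENNReal hC hx),
      lintegral_add_left measurable_const, lintegral_const, ENNReal.ofReal_mul hC,
      ofReal_measureReal]
  unfold erealIntegral
  rw [erealPos_eq_toENNReal, if_neg hpos]
  exact coe_sub_coe_eq_of_add_eq_add (by positivity) hpos hsplit

theorem le_coe_sub_coe_iff {t : EReal} (ht : t ≤ C) (A : ℝ≥0∞) :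
    t ≤ (C : EReal) - A ↔ A ≤ ((C : EReal) - t).toENNReal := by
  have hnonneg : 0 ≤ (C : EReal) - t := by
    rwa [EReal.le_sub_iff_add_le (by simp) (by simp), zero_add]
  rw [← EReal.coe_ennreal_le_coe_ennreal_iff, EReal.coe_toENNReal hnonneg,
    EReal.le_sub_iff_add_le (by simp) (by simp), EReal.le_sub_iff_add_le (by simp) (by simp),
    add_comm]

theorem inv_mul_coe_mul_sub {V : ℝ} (hV : 0 < V) (C : ℝ) (D : ℝ≥0∞) :
    ((V⁻¹ : ℝ) : EReal) * (((C * V : ℝ) : EReal) - D) =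
      (C : EReal) - (D / ENNReal.ofReal V : ℝ≥0∞) := by
  induction D with
  | top => simp [ENNReal.top_div, EReal.coe_mul_bot_of_pos (inv_pos.2 hV)]
  | coe D =>
    lift V to NNReal using hV.le
    have hV0 : V ≠ 0 := by rintro rfl; simp at hV
    rw [ofReal_coe_nnreal, ← ENNReal.coe_div hV0]
    have hreal : (V : ℝ)⁻¹ * (C * V - D) = C - (D / V : NNReal) := by push_cast; field_simp
    exact congrArg ((↑) : ℝ → EReal) hreal

theorem le_inv_mul_erealIntegral_iff [IsFiniteMeasure μ] [NeZero μ] (hC : 0 ≤ C)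
    (hf : AEMeasurable f μ) (hfC : ∀ᵐ x ∂μ, f x ≤ C) {t : EReal} (ht : t ≤ C) :
    t ≤ (((μ.real Set.univ)⁻¹ : ℝ) : EReal) * erealIntegral μ f ↔
      ⨍⁻ x, ((C : EReal) - f x).toENNReal ∂μ ≤ ((C : EReal) - t).toENNReal := by
  rw [← le_coe_sub_coe_iff ht, erealIntegral_eq_sub_lintegral hC hf hfC,
    inv_mul_coe_mul_sub measureReal_univ_pos, laverage_eq, ofReal_measureReal]

end ExtendedIntegral

section Semicontinuity

variable {X : Type*} [TopologicalSpace X]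

theorem upperSemicontinuous_piecewise_bot {β : Type*} [Preorder β] [OrderBot β] {s : Set X}
    [DecidablePred (· ∈ s)] {f : X → β} (hs : IsClosed s) (hf : UpperSemicontinuousOn f s) :
    UpperSemicontinuous (s.piecewise f ⊥) := by
  intro x y hy
  by_cases hx : x ∈ s
  · rw [Set.piecewise_eq_of_mem _ _ _ hx] at hy
    filter_upwards [eventually_nhdsWithin_iff.1 (hf x hx y hy)] with w hw
    by_cases hws : w ∈ s
    · simpa [hws] using hw hws
    · simpa [hws] using bot_le.trans_lt hy
  · rw [Set.piecewise_eq_of_notMem _ _ _ hx] at hy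
    filter_upwards [hs.isOpen_compl.mem_nhds hx] with w hw
    rwa [Set.piecewise_eq_of_notMem _ _ _ hw]

theorem lowerSemicontinuous_toENNReal_coe_sub {f : X → EReal} (hf : UpperSemicontinuous f)
    (C : ℝ) : LowerSemicontinuous fun x => ((C : EReal) - f x).toENNReal := by
  have hcont : Continuous fun t : EReal => ((C : EReal) - t).toENNReal := by
    refine EReal.continuous_toENNReal.comp (continuous_iff_continuousAt.2 fun t => ?_)
    exact (EReal.continuousAt_add (p := (C, -t)) (by simp) (by simp)).comp
      (f := fun t => ((C : EReal), -t)) (by fun_prop)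
  exact hcont.comp_upperSemicontinuous_antitone hf fun s t hst =>
    EReal.toENNReal_le_toENNReal (EReal.sub_le_sub le_rfl hst)

theorem exists_nonneg_forall_le_coe {s : Set X} (hs : IsCompact s) {f : X → EReal}
    (hf : UpperSemicontinuousOn f s) (htop : ∀ x ∈ s, f x ≠ ⊤) :
    ∃ C : ℝ, 0 ≤ C ∧ ∀ x ∈ s, f x ≤ C := by
  rcases s.eq_empty_or_nonempty with rfl | hne
  · exact ⟨0, le_rfl, by simp⟩
  obtain ⟨x, hx, hmax⟩ := hf.exists_isMaxOn hne hs
  refine ⟨max (f x).toReal 0, le_max_right _ _, fun y hy => (hmax hy).trans ?_⟩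
  exact (EReal.le_coe_toReal (htop x hx)).trans (mod_cast le_max_left _ _)

theorem lowerSemicontinuous_lintegral [FirstCountableTopology X] {α : Type*} [MeasurableSpace α]
    {μ : Measure α} {F : X → α → ℝ≥0∞} (hmeas : ∀ z, AEMeasurable (F z) μ)
    (hF : ∀ᵐ x ∂μ, LowerSemicontinuous fun z => F z x) :
    LowerSemicontinuous fun z => ∫⁻ x, F z x ∂μ :=
  lowerSemicontinuous_iff_le_liminf.2 fun z =>
    (lintegral_mono_ae (hF.mono fun _ hx => hx.le_liminf z)).trans (lintegral_liminf_le' hmeas)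

end Semicontinuity

section MinimumPrinciple

theorem ae_le_of_laverage_le {α : Type*} [MeasurableSpace α] {μ : Measure α} [IsFiniteMeasure μ]
    [NeZero μ] {f : α → ℝ≥0∞} {m : ℝ≥0∞} (hf : AEMeasurable f μ)
    (hm : ∀ᵐ x ∂μ, m ≤ f x) (h : ⨍⁻ x, f x ∂μ ≤ m) : ∀ᵐ x ∂μ, f x ≤ m := by
  rcases eq_or_ne m ⊤ with rfl | htop
  · exact .of_forall fun _ => le_top
  have hle : ∫⁻ x, f x ∂μ ≤ ∫⁻ _, m ∂μ := by
    rw [← measure_mul_laverage, lintegral_const, mul_comm]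
    gcongr
  refine (ae_eq_of_ae_le_of_lintegral_le hm ?_ hf hle).symm.le
  simpa using ENNReal.mul_ne_top htop (measure_ne_top μ _)

theorem exists_isMinOn_forall_dist_le {X β : Type*} [PseudoMetricSpace X] [LinearOrder β]
    {s : Set X} (hs : IsCompact s) (hne : s.Nonempty) {f : X → β} (hf : LowerSemicontinuousOn f s)
    (c : X) : ∃ z ∈ s, IsMinOn f s z ∧ ∀ w ∈ s, f w ≤ f z → dist w c ≤ dist z c := by
  obtain ⟨z₀, hz₀, hmin⟩ := hf.exists_isMinOn hne hs
  obtain ⟨z, ⟨hz, hzz₀⟩, hfar⟩ := (hf.isCompact_inter_preimage_Iic hs (f z₀)).exists_isMaxOn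
    ⟨z₀, hz₀, le_refl (f z₀)⟩ (f := (dist · c)) (by fun_prop)
  exact ⟨z, hz, isMinOn_iff.2 fun w hw => le_trans hzz₀ (isMinOn_iff.1 hmin w hw),
    fun w hw hwz => hfar ⟨hw, hwz.trans hzz₀⟩⟩

theorem add_smul_mem_closedBall {E : Type*} [SeminormedAddCommGroup E] [NormedSpace ℝ E]
    {c z ζ : E} {R : ℝ} (hz : z ∈ ball c R) (hζ : ζ ∈ ball (0 : E) 1) :
    z + (R - dist z c) • ζ ∈ closedBall c R := by
  rw [mem_ball_zero_iff] at hζ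
  have hnonneg : 0 ≤ R - dist z c := sub_nonneg.2 (mem_ball.1 hz).le
  calc dist (z + (R - dist z c) • ζ) c
      ≤ dist (z + (R - dist z c) • ζ) z + dist z c := dist_triangle _ _ _
    _ = (R - dist z c) * ‖ζ‖ + dist z c := by
      rw [dist_self_add_left, norm_smul_of_nonneg hnonneg]
    _ ≤ (R - dist z c) * 1 + dist z c := by gcongr
    _ = R := by ring

variable {E : Type*} [NormedAddCommGroup E] [NormedSpace ℝ E] [Nontrivial E]

theorem exists_mem_ball_dist_lt (c z : E) {δ : ℝ} (hδ : 0 < δ) :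
    ∃ w ∈ ball z δ, dist z c < dist w c := by
  by_contra! h
  have hsub : ball z δ ⊆ closedBall c (dist z c) := h
  have hz : z ∈ interior (closedBall c (dist z c)) :=
    interior_maximal hsub isOpen_ball (mem_ball_self hδ)
  rw [interior_closedBall'] at hz
  exact lt_irrefl _ (mem_ball.1 hz)

theorem exists_mem_sphere_isMinOn [ProperSpace E] [MeasurableSpace E] [BorelSpace E]
    {μ : Measure E} [μ.IsOpenPosMeasure] [IsFiniteMeasureOnCompacts μ] {f : E → ℝ≥0∞} {c : E}
    {R : ℝ} (hR : 0 ≤ R) (hf : LowerSemicontinuous f)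
    (hmean : ∀ z ∈ ball c R, ∃ r > (0 : ℝ),
      (∀ ζ ∈ ball (0 : E) 1, z + r • ζ ∈ closedBall c R) ∧
        ⨍⁻ ζ in ball (0 : E) 1, f (z + r • ζ) ∂μ ≤ f z) :
    ∃ w ∈ sphere c R, IsMinOn f (closedBall c R) w := by
  -- If the farthest minimum point were interior, `f` would be minimal a.e. on a small ball around
  -- it, hence somewhere farther away.
  obtain ⟨z, hzR, hzmin, hfar⟩ := exists_isMinOn_forall_dist_le (isCompact_closedBall c R)
    ⟨c, mem_closedBall_self hR⟩ (hf.lowerSemicontinuousOn _) c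
  refine ⟨z, (mem_closedBall.1 hzR).eq_of_not_lt fun hlt => ?_, hzmin⟩
  obtain ⟨r, hr, hsub, hle⟩ := hmean z hlt
  have : IsFiniteMeasure (μ.restrict (ball 0 1)) :=
    isFiniteMeasure_restrict.2 measure_ball_lt_top.ne
  have : NeZero (μ (ball 0 1)) := ⟨(measure_ball_pos μ 0 one_pos).ne'⟩
  have hae : ∀ᵐ ζ ∂μ.restrict (ball 0 1), f (z + r • ζ) ≤ f z := by
    refine ae_le_of_laverage_le ?_ ?_ hle
    · exact (hf.comp (g := fun ζ => z + r • ζ) (by fun_prop)).measurable.aemeasurable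
    · filter_upwards [ae_restrict_mem measurableSet_ball] with ζ hζ using hzmin (hsub ζ hζ)
  have hopen : IsOpen {ζ : E | ζ ∈ ball 0 1 ∧ dist z c < dist (z + r • ζ) c} :=
    isOpen_ball.inter (isOpen_lt (g := fun ζ => dist (z + r • ζ) c) (by fun_prop) (by fun_prop))
  have hne : {ζ : E | ζ ∈ ball 0 1 ∧ dist z c < dist (z + r • ζ) c}.Nonempty := by
    obtain ⟨w, hw, hwfar⟩ := exists_mem_ball_dist_lt c z hr
    refine ⟨r⁻¹ • (w - z), ?_, ?_⟩
    · simpa [norm_smul, abs_of_pos hr, inv_mul_lt_iff₀ hr, ← dist_eq_norm] using hw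
    · simpa [smul_inv_smul₀ hr.ne'] using hwfar
  obtain ⟨ζ, ⟨hζ, hζfar⟩, hζmin⟩ := (Measure.dense_of_ae
    ((ae_restrict_iff' measurableSet_ball).1 hae)).inter_open_nonempty _ hopen hne
  exact hζfar.not_ge (hfar _ (hsub ζ hζ) (hζmin hζ))

end MinimumPrinciple

section Rotation

variable {E : Type*} [NormedAddCommGroup E] [ProperSpace E] [MeasurableSpace E] [BorelSpace E]
  (μ : Measure E) [μ.IsAddHaarMeasure]

theorem measurePreserving_linearIsometryEquiv {S : Type*} [Semiring S] [Module S E]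
    (e : E ≃ₗᵢ[S] E) : MeasurePreserving e μ μ := by
  have hmeas : Measurable e := e.continuous.measurable
  have : (μ.map e).IsAddHaarMeasure := e.toContinuousLinearEquiv.isAddHaarMeasure_map μ
  have hsmul := Measure.isAddLeftInvariant_eq_smul (μ.map e) μ
  have hpre : e ⁻¹' ball 0 1 = ball 0 1 := by simp
  have hball : (μ.map e).addHaarScalarFactor μ * μ (ball 0 1) = μ (ball 0 1) :=
    calc (μ.map e).addHaarScalarFactor μ * μ (ball 0 1)
      _ = μ.map e (ball 0 1) := (congrArg (· (ball 0 1)) hsmul).symm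
      _ = μ (ball 0 1) := by rw [Measure.map_apply hmeas measurableSet_ball, hpre]
  have hone : ((μ.map e).addHaarScalarFactor μ : ℝ≥0∞) = 1 :=
    (ENNReal.mul_eq_right (measure_ball_pos μ 0 one_pos).ne' measure_ball_lt_top.ne).1 hball
  exact ⟨hmeas, by rw [hsmul, ENNReal.coe_eq_one.1 hone, one_smul]⟩

variable [NormedSpace ℂ E] {c : ℂ}

theorem measurePreserving_homothety (hc : ‖c‖ = 1) (a : E) :
    MeasurePreserving (AffineMap.homothety a c) μ μ := by
  have hc0 : c ≠ 0 := by rintro rfl; simp at hc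
  let e : E ≃ₗᵢ[ℂ] E := ⟨.smulOfNeZero ℂ E c hc0, fun x => by simp [norm_smul, hc]⟩
  exact (measurePreserving_add_right μ a).comp
    ((measurePreserving_linearIsometryEquiv μ e).comp (measurePreserving_sub_right μ a))

theorem measurePreserving_homothety_restrict_ball (hc : ‖c‖ = 1) (a : E) (R : ℝ) :
    MeasurePreserving (AffineMap.homothety a c) (μ.restrict (ball a R))
      (μ.restrict (ball a R)) := by
  have hpre : AffineMap.homothety a c ⁻¹' ball a R = ball a R := by
    ext x
    simp [dist_homothety_center, hc, dist_comm a]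
  simpa only [hpre] using
    (measurePreserving_homothety μ hc a).restrict_preimage (measurableSet_ball (x := a) (ε := R))

end Rotation

section AffineDiscs

variable {E : Type*} [NormedAddCommGroup E] [NormedSpace ℂ E]

/-- The sub-mean-value inequality for an extended real-valued function over the affine discs
`ζ ↦ p + ζ • v`, `‖ζ‖ < 1`, contained in `s`. The disc may degenerate to a point. -/
def SubMeanOnDiscs (φ : E → EReal) (s : Set E) : Prop :=
  ∀ p v : E, (∀ ζ ∈ ball (0 : ℂ) 1, p + ζ • v ∈ s) →
    φ p ≤ ((Real.pi⁻¹ : ℝ) : EReal) *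
      erealIntegral (volume.restrict (ball (0 : ℂ) 1)) fun ζ => φ (p + ζ • v)

/-- The super-mean-value inequality for a `[0, ∞]`-valued function over the affine discs
`ζ ↦ p + ζ • v`, `‖ζ‖ < 1`, contained in `s`. -/
def SuperMeanOnDiscs (f : E → ℝ≥0∞) (s : Set E) : Prop :=
  ∀ p v : E, (∀ ζ ∈ ball (0 : ℂ) 1, p + ζ • v ∈ s) →
    ⨍⁻ ζ in ball (0 : ℂ) 1, f (p + ζ • v) ∂volume ≤ f p

variable {φ ψ : E → EReal} {s : Set E}

theorem SubMeanOnDiscs.congr (hφ : SubMeanOnDiscs φ s) (h : Set.EqOn φ ψ s) :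
    SubMeanOnDiscs ψ s := by
  intro p v hpv
  have hp : p ∈ s := by simpa using hpv 0 (by simp)
  have hdisc : erealIntegral (volume.restrict (ball (0 : ℂ) 1)) (fun ζ => φ (p + ζ • v)) =
      erealIntegral (volume.restrict (ball (0 : ℂ) 1)) fun ζ => ψ (p + ζ • v) :=
    erealIntegral_congr_ae ((ae_restrict_mem measurableSet_ball).mono fun ζ hζ => h (hpv ζ hζ))
  rw [← h hp, ← hdisc]
  exact hφ p v hpv

theorem SubMeanOnDiscs.toENNReal_coe_sub (hφ : SubMeanOnDiscs φ s) (husc : UpperSemicontinuous φ)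
    {C : ℝ} (hC : 0 ≤ C) (hφC : ∀ x, φ x ≤ C) :
    SuperMeanOnDiscs (fun x => ((C : EReal) - φ x).toENNReal) s := by
  intro p v hpv
  have : IsFiniteMeasure (volume.restrict (ball (0 : ℂ) 1)) :=
    isFiniteMeasure_restrict.2 measure_ball_lt_top.ne
  have : NeZero (volume (ball (0 : ℂ) 1)) := ⟨(measure_ball_pos volume 0 one_pos).ne'⟩
  have harea : (volume.restrict (ball (0 : ℂ) 1)).real Set.univ = Real.pi := by
    simp [measureReal_def, Complex.volume_ball]
  have hdisc : UpperSemicontinuous fun ζ : ℂ => φ (p + ζ • v) := husc.comp (by fun_prop)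
  rw [← le_inv_mul_erealIntegral_iff hC hdisc.measurable.aemeasurable
    (.of_forall fun ζ => hφC (p + ζ • v)) (hφC p), harea]
  exact hφ p v hpv

end AffineDiscs

section Dilation

variable {E : Type*} [NormedAddCommGroup E] [NormedSpace ℂ E] [MeasurableSpace E]

/-- The integral of `f` after dilation about `a` by the complex factor `z`, that is
`∫⁻ f (a + z (x - a)) dμ(x)`, as a function of `z`. -/
def dilatedLIntegral (μ : Measure E) (f : E → ℝ≥0∞) (a : E) (z : ℂ) : ℝ≥0∞ :=
  ∫⁻ x, f (AffineMap.lineMap a x z) ∂μ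

variable {μ : Measure E} {f : E → ℝ≥0∞} {a : E} {R : ℝ}

theorem dilatedLIntegral_zero : dilatedLIntegral μ f a 0 = f a * μ Set.univ := by
  simp [dilatedLIntegral]

theorem dilatedLIntegral_of_measurePreserving {c : ℂ} (hf : Measurable f)
    (hc : MeasurePreserving (AffineMap.homothety a c) μ μ) :
    dilatedLIntegral μ f a c = ∫⁻ x, f x ∂μ :=
  hc.lintegral_comp hf

variable [BorelSpace E]

theorem lowerSemicontinuous_dilatedLIntegral (hf : LowerSemicontinuous f) :
    LowerSemicontinuous (dilatedLIntegral μ f a) :=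
  lowerSemicontinuous_lintegral
    (fun z => (hf.comp (g := (AffineMap.lineMap a · z)) (by fun_prop)).measurable.aemeasurable)
    (.of_forall fun x => hf.comp (g := AffineMap.lineMap a x) (by fun_prop))

variable [SecondCountableTopology E] [SFinite μ]

theorem laverage_dilatedLIntegral_le (hf : LowerSemicontinuous f)
    (hμ : ∀ᵐ x ∂μ, x ∈ closedBall a R) (hmean : SuperMeanOnDiscs f (closedBall a R)) {z : ℂ}
    {r : ℝ} (hr : ∀ ζ ∈ ball (0 : ℂ) 1, z + r • ζ ∈ closedBall (0 : ℂ) 1) :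
    ⨍⁻ ζ in ball (0 : ℂ) 1, dilatedLIntegral μ f a (z + r • ζ) ∂volume ≤
      dilatedLIntegral μ f a z := by
  have hmeas : Measurable fun q : ℂ × E => f (AffineMap.lineMap a q.2 (z + r • q.1)) :=
    (hf.comp (g := fun q : ℂ × E => AffineMap.lineMap a q.2 (z + r • q.1))
      (by fun_prop)).measurable
  simp only [laverage, dilatedLIntegral]
  rw [lintegral_lintegral_swap hmeas.aemeasurable]
  refine lintegral_mono_ae (hμ.mono fun x hx => ?_)
  have hdisc (ζ : ℂ) : AffineMap.lineMap a x (z + r • ζ) =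
      AffineMap.lineMap a x z + ζ • ((r : ℂ) • (x - a)) := by
    simp only [AffineMap.lineMap_apply, vsub_eq_sub, vadd_eq_add, add_smul, smul_smul,
      Complex.real_smul, mul_comm ζ]
    abel
  simp only [hdisc]
  refine hmean _ _ fun ζ hζ => ?_
  have hle := mem_closedBall_zero_iff.1 (hr ζ hζ)
  rw [← hdisc, mem_closedBall, dist_lineMap_left, dist_comm]
  exact (mul_le_of_le_one_left dist_nonneg hle).trans (mem_closedBall.1 hx)

theorem lintegral_le_of_superMeanOnDiscs (hf : LowerSemicontinuous f)
    (hμ : ∀ᵐ x ∂μ, x ∈ closedBall a R)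
    (hrot : ∀ c : ℂ, ‖c‖ = 1 → MeasurePreserving (AffineMap.homothety a c) μ μ)
    (hmean : SuperMeanOnDiscs f (closedBall a R)) : ∫⁻ x, f x ∂μ ≤ f a * μ Set.univ := by
  obtain ⟨w, hw, hmin⟩ := exists_mem_sphere_isMinOn (μ := volume) zero_le_one
    (lowerSemicontinuous_dilatedLIntegral (μ := μ) (a := a) hf) fun z hz =>
      ⟨1 - dist z 0, sub_pos.2 hz, fun ζ => add_smul_mem_closedBall hz,
        laverage_dilatedLIntegral_le hf hμ hmean fun ζ => add_smul_mem_closedBall hz⟩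
  calc ∫⁻ x, f x ∂μ = dilatedLIntegral μ f a w :=
        (dilatedLIntegral_of_measurePreserving hf.measurable
          (hrot w (mem_sphere_zero_iff_norm.1 hw))).symm
    _ ≤ dilatedLIntegral μ f a 0 := hmin (mem_closedBall_self zero_le_one)
    _ = f a * μ Set.univ := dilatedLIntegral_zero

end Dilation

section SubMeanValue

variable {E : Type*} [NormedAddCommGroup E] [NormedSpace ℂ E] [ProperSpace E]
  [MeasurableSpace E] [BorelSpace E] (μ : Measure E) [μ.IsAddHaarMeasure] {φ : E → EReal} {a : E}
  {R : ℝ}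

theorem SubMeanOnDiscs.le_inv_mul_erealIntegral_ball (hmean : SubMeanOnDiscs φ (closedBall a R))
    (hR : 0 < R) (husc : UpperSemicontinuous φ) {C : ℝ} (hC : 0 ≤ C) (hφC : ∀ x, φ x ≤ C) :
    φ a ≤ (((μ.real (ball a R))⁻¹ : ℝ) : EReal) * erealIntegral (μ.restrict (ball a R)) φ := by
  have : IsFiniteMeasure (μ.restrict (ball a R)) :=
    isFiniteMeasure_restrict.2 measure_ball_lt_top.ne
  have : NeZero (μ (ball a R)) := ⟨(measure_ball_pos μ a hR).ne'⟩
  rw [← measureReal_restrict_apply_univ, le_inv_mul_erealIntegral_iff hC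
    husc.measurable.aemeasurable (.of_forall hφC) (hφC a), laverage_eq,
    ENNReal.div_le_iff (NeZero.ne _) (measure_ne_top _ _)]
  exact lintegral_le_of_superMeanOnDiscs (lowerSemicontinuous_toENNReal_coe_sub husc C)
    ((ae_restrict_mem measurableSet_ball).mono fun x hx => ball_subset_closedBall hx)
    (fun c hc => measurePreserving_homothety_restrict_ball μ hc a R)
    (hmean.toENNReal_coe_sub husc hC hφC)

theorem psh_subMeanValue_ball_general (hR : 0 < R)
    (husc : UpperSemicontinuousOn φ (closedBall a R)) (htop : ∀ x ∈ closedBall a R, φ x ≠ ⊤)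
    (hmean : SubMeanOnDiscs φ (closedBall a R)) :
    φ a ≤ (((μ.real (ball a R))⁻¹ : ℝ) : EReal) * erealIntegral (μ.restrict (ball a R)) φ := by
  classical
  obtain ⟨C, hC, hφC⟩ := exists_nonneg_forall_le_coe (isCompact_closedBall a R) husc htop
  let ψ : E → EReal := (closedBall a R).piecewise φ ⊥
  have heq : Set.EqOn ψ φ (closedBall a R) := Set.piecewise_eqOn _ _ _
  have hψC (x : E) : ψ x ≤ C :=
    Set.piecewise_le (g := fun _ => (C : EReal)) hφC (fun _ _ => bot_le) x
  have hball : erealIntegral (μ.restrict (ball a R)) ψ = erealIntegral (μ.restrict (ball a R)) φ :=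
    erealIntegral_congr_ae ((ae_restrict_mem measurableSet_ball).mono fun x hx =>
      heq (ball_subset_closedBall hx))
  rw [← heq (mem_closedBall_self hR.le), ← hball]
  exact (hmean.congr heq.symm).le_inv_mul_erealIntegral_ball μ hR
    (upperSemicontinuous_piecewise_bot isClosed_closedBall husc) hC hψC

end SubMeanValue

theorem PshOn.subMeanOnDiscs {n : ℕ} {U s : Set (EuclideanSpace ℂ (Fin n))}
    {φ : EuclideanSpace ℂ (Fin n) → EReal} (hφ : PshOn U φ) (hs : s ⊆ U) : SubMeanOnDiscs φ s := by
  intro p v hpv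
  simpa using hφ.meanValue (fun ζ => p + ζ • v) (by fun_prop) fun ζ hζ => hs (hpv ζ hζ)

/-- A plurisubharmonic function on an open set `U ⊆ ℂⁿ` satisfies the
sub-mean-value inequality over every Euclidean ball whose closure is contained in `U`:
`φ(a) ≤ (1/λ(B_R(a))) ∫_{B_R(a)} φ dλ`. -/
theorem psh_subMeanValue_ball {n : ℕ} {U : Set (EuclideanSpace ℂ (Fin n))} (hU : IsOpen U)
    {φ : EuclideanSpace ℂ (Fin n) → EReal} (hφ : PshOn U φ)
    (a : EuclideanSpace ℂ (Fin n)) (R : ℝ) (hR : 0 < R) (hball : closedBall a R ⊆ U) :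
    φ a ≤ ((((volume (ball a R)).toReal)⁻¹ : ℝ) : EReal) *
      erealIntegral (volume.restrict (ball a R)) φ :=
  psh_subMeanValue_ball_general volume hR (hφ.usc.mono hball)
    (fun x hx => hφ.ne_top x (hball hx)) (hφ.subMeanOnDiscs hball)
end
end

section
/- Let B ⊆ ℂⁿ be the open unit ball, let g : B → ℂ be holomorphic with |g(0)| = 1, let r ≥ 1, and let u₁, …, u_r : B → [0,+∞] be Lebesgue-measurable functions such that |g(x)|² ≤ u₁(x)·⋯·u_r(x) for almost every x ∈ B (products in [0,+∞] with the convention 0·(+∞) = 0) and ∫_B u_i dλ ≤ λ(B) for each i = 1, …, r. Then g is constant with |g| ≡ 1 on B, and u_i(x) = 1 for almost every x ∈ B, for each i = 1, …, r. -/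
/-!
Adjoin the constant function `1` to `u₁, …, u_r` and put `p = 2 / (r + 1)`. The inequality of
arithmetic and geometric means gives `(r + 1) |g| ^ p ≤ 1 + u₁ + ⋯ + u_r` almost everywhere, and the
right-hand side has integral at most `(r + 1) λ(B)`. Conversely, Jensen's formula for `log |g|` on
the complex discs through the origin, Jensen's inequality for `exp` and the circle invariance of `λ`
give `λ(B) ≤ ∫_B |g| ^ p`. So the two sides agree almost everywhere, and the equality case of the
mean inequality makes all `r + 1` entries equal to the adjoined `1`. Then `|g| = 1` on `B`, and the
maximum principle makes `g` constant. The same argument works on a balanced open set of finite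
measure, for any circle-invariant measure that charges open sets.
-/

noncomputable section

open MeasureTheory ENNReal Metric Complex Filter

section ArithMeanGeomMean

open scoped NNReal

variable {ι : Type*} [Fintype ι]

lemma le_prod_rpow_inv_card_of_pow_card_le_prod [Nonempty ι] {v : ι → ℝ} {t : ℝ}
    (hv : ∀ i, 0 ≤ v i) (ht : 0 ≤ t) (h : t ^ Fintype.card ι ≤ ∏ i, v i) :
    t ≤ ∏ i, v i ^ (Fintype.card ι : ℝ)⁻¹ := by
  rw [Real.finsetProd_rpow _ _ fun i _ => hv i,
    Real.le_rpow_inv_iff_of_pos ht (Finset.prod_nonneg fun i _ => hv i) (by positivity),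
    Real.rpow_natCast]
  exact h

lemma card_mul_le_sum_of_pow_card_le_prod {v : ι → ℝ≥0∞} {t : ℝ≥0∞}
    (h : t ^ Fintype.card ι ≤ ∏ i, v i) : Fintype.card ι * t ≤ ∑ i, v i := by
  cases isEmpty_or_nonempty ι
  · simp
  by_cases hv : ∃ i, v i = ∞
  · obtain ⟨i, hi⟩ := hv
    exact le_top.trans_eq (ENNReal.sum_eq_top.2 ⟨i, Finset.mem_univ i, hi⟩).symm
  push Not at hv
  have ht : t ≠ ∞ := fun ht => by
    rw [ht, ENNReal.top_pow Fintype.card_ne_zero, top_le_iff] at h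
    exact ENNReal.prod_ne_top (fun i _ => hv i) h
  lift v to ι → ℝ≥0 using hv
  lift t to ℝ≥0 using ht
  beta_reduce at h ⊢
  norm_cast at h ⊢
  have t_le_geom : (t : ℝ) ≤ ∏ i, (v i : ℝ) ^ (Fintype.card ι : ℝ)⁻¹ :=
    le_prod_rpow_inv_card_of_pow_card_le_prod (fun i => (v i).coe_nonneg) t.coe_nonneg
      (by exact_mod_cast h)
  have geom_le_arith : ∏ i, (v i : ℝ) ^ (Fintype.card ι : ℝ)⁻¹ ≤
      ∑ i, (Fintype.card ι : ℝ)⁻¹ * v i :=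
    Real.geom_mean_le_arith_mean_weighted _ (fun _ => _) _ (fun _ _ => by positivity) (by simp)
      fun i _ => (v i).coe_nonneg
  have t_le_arith := t_le_geom.trans geom_le_arith
  rw [← Finset.mul_sum, le_inv_mul_iff₀ (by positivity)] at t_le_arith
  exact_mod_cast t_le_arith

lemma eq_of_pow_card_le_prod_of_sum_le_card_mul {v : ι → ℝ≥0∞} {t : ℝ≥0∞} (ht : t ≠ ∞)
    (hprod : t ^ Fintype.card ι ≤ ∏ i, v i) (hsum : ∑ i, v i ≤ Fintype.card ι * t) (i : ι) :
    v i = t := by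
  have : Nonempty ι := ⟨i⟩
  have hv : ∀ j, v j ≠ ∞ := fun j =>
    (((Finset.single_le_sum_of_canonicallyOrdered (Finset.mem_univ j)).trans hsum).trans_lt
      (by finiteness)).ne
  lift v to ι → ℝ≥0 using hv
  lift t to ℝ≥0 using ht
  beta_reduce at hprod hsum ⊢
  norm_cast at hprod hsum ⊢
  set w : ι → ℝ := fun _ => (Fintype.card ι : ℝ)⁻¹
  have hw : ∀ j ∈ Finset.univ, 0 < w j := fun _ _ => by positivity
  have hw1 : ∑ j, w j = 1 := by simp [w]
  have hv0 : ∀ j ∈ Finset.univ, 0 ≤ (v j : ℝ) := fun j _ => (v j).coe_nonneg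
  have t_le_geom : (t : ℝ) ≤ ∏ j, (v j : ℝ) ^ w j :=
    le_prod_rpow_inv_card_of_pow_card_le_prod (fun j => (v j).coe_nonneg) t.coe_nonneg
      (by exact_mod_cast hprod)
  have geom_le_arith : ∏ j, (v j : ℝ) ^ w j ≤ ∑ j, w j * v j :=
    Real.geom_mean_le_arith_mean_weighted _ w _ (fun j hj => (hw j hj).le) hw1 hv0
  have arith_le_t : ∑ j, w j * v j ≤ (t : ℝ) := by
    rw [← Finset.mul_sum, inv_mul_le_iff₀ (by positivity)]
    exact_mod_cast hsum
  have all_eq_arith := (Real.geom_mean_eq_arith_mean_weighted_iff_of_pos' _ w _ hw hw1 hv0).1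
    (geom_le_arith.antisymm (arith_le_t.trans t_le_geom))
  exact NNReal.coe_injective <| (all_eq_arith i (Finset.mem_univ i)).trans <|
    arith_le_t.antisymm (t_le_geom.trans geom_le_arith)

theorem ae_eq_of_pow_card_le_prod {α : Type*} {_ : MeasurableSpace α} {ν : Measure α}
    {v : ι → α → ℝ≥0∞} {h : α → ℝ≥0∞} (hv : ∀ i, AEMeasurable (v i) ν)
    (hv_fin : ∀ i, ∫⁻ x, v i x ∂ν ≠ ∞) (hprod : ∀ᵐ x ∂ν, h x ^ Fintype.card ι ≤ ∏ i, v i x)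
    (hint : ∑ i, ∫⁻ x, v i x ∂ν ≤ Fintype.card ι * ∫⁻ x, h x ∂ν) (i : ι) : v i =ᵐ[ν] h := by
  have : Nonempty ι := ⟨i⟩
  rw [← lintegral_finsetSum' _ fun j _ => hv j,
    ← lintegral_const_mul' _ _ (natCast_ne_top _)] at hint
  have sum_meas : AEMeasurable (fun x => ∑ j, v j x) ν :=
    Finset.aemeasurable_fun_sum _ fun j _ => hv j
  have sum_fin : ∫⁻ x, ∑ j, v j x ∂ν ≠ ∞ := by
    rw [lintegral_finsetSum' _ fun j _ => hv j]
    exact ENNReal.sum_ne_top.2 fun j _ => hv_fin j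
  have amgm : ∀ᵐ x ∂ν, Fintype.card ι * h x ≤ ∑ j, v j x :=
    hprod.mono fun _ => card_mul_le_sum_of_pow_card_le_prod
  have amgm_eq : ∀ᵐ x ∂ν, Fintype.card ι * h x = ∑ j, v j x :=
    ae_eq_of_ae_le_of_lintegral_le amgm
      (ne_top_of_le_ne_top sum_fin (lintegral_mono_ae amgm)) sum_meas hint
  filter_upwards [hprod, amgm_eq, ae_lt_top' sum_meas sum_fin] with x hpow hsum hfin
  refine eq_of_pow_card_le_prod_of_sum_le_card_mul (fun htop => hfin.ne ?_) hpow hsum.ge i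
  rw [← hsum, htop, ENNReal.mul_top (Nat.cast_ne_zero.2 Fintype.card_ne_zero)]

theorem ae_eq_one_of_pow_le_prod {α : Type*} {_ : MeasurableSpace α} {ν : Measure α}
    [IsFiniteMeasure ν] {u : ι → α → ℝ≥0∞} {h : α → ℝ≥0∞} (hu : ∀ i, AEMeasurable (u i) ν)
    (hprod : ∀ᵐ x ∂ν, h x ^ (Fintype.card ι + 1) ≤ ∏ i, u i x)
    (hu_int : ∀ i, ∫⁻ x, u i x ∂ν ≤ ν Set.univ) (hh_int : ν Set.univ ≤ ∫⁻ x, h x ∂ν) :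
    h =ᵐ[ν] 1 ∧ ∀ i, u i =ᵐ[ν] 1 := by
  let v : Option ι → α → ℝ≥0∞ := fun o => o.elim 1 u
  have v_int : ∀ o, ∫⁻ x, v o x ∂ν ≤ ν Set.univ := Option.rec (by simp [v]) hu_int
  have v_prod : ∀ᵐ x ∂ν, h x ^ Fintype.card (Option ι) ≤ ∏ o, v o x := by
    simpa only [v, Fintype.card_option, Fintype.prod_option, Option.elim, Pi.one_apply,
      one_mul] using hprod
  have v_sum : ∑ o, ∫⁻ x, v o x ∂ν ≤ Fintype.card (Option ι) * ∫⁻ x, h x ∂ν := calc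
    ∑ o, ∫⁻ x, v o x ∂ν ≤ ∑ _ : Option ι, ν Set.univ := Finset.sum_le_sum fun o _ => v_int o
    _ = Fintype.card (Option ι) * ν Set.univ := by
        rw [Finset.sum_const, Finset.card_univ, nsmul_eq_mul]
    _ ≤ Fintype.card (Option ι) * ∫⁻ x, h x ∂ν := by gcongr
  have v_eq : ∀ o, v o =ᵐ[ν] h :=
    ae_eq_of_pow_card_le_prod (Option.rec aemeasurable_const hu)
      (fun o => ne_top_of_le_ne_top (measure_ne_top ν _) (v_int o)) v_prod v_sum
  have h_eq : h =ᵐ[ν] 1 := (v_eq none).symm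
  exact ⟨h_eq, fun i => (v_eq (some i)).trans h_eq⟩

end ArithMeanGeomMean

section CircleAverage

open scoped Real

variable {f : ℂ → ℂ} {c : ℂ} {R p : ℝ}

lemma map_circleAverage_le_of_convexOn {F : Type*} [NormedAddCommGroup F] [NormedSpace ℝ F]
    [CompleteSpace F] {s : Set F} {ψ : F → ℝ} {φ : ℂ → F} (hψ : ConvexOn ℝ s ψ)
    (hψc : ContinuousOn ψ s) (hs : IsClosed s) (hφs : ∀ z ∈ sphere c |R|, φ z ∈ s)
    (hφ : CircleIntegrable φ c R) (hψφ : CircleIntegrable (fun z => ψ (φ z)) c R) :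
    ψ (Real.circleAverage φ c R) ≤ Real.circleAverage (fun z => ψ (φ z)) c R := by
  rw [Real.circleAverage_eq_intervalAverage, Real.circleAverage_eq_intervalAverage]
  exact hψ.map_set_average_le hψc hs (by simp [Real.pi_ne_zero]) (by simp [ENNReal.mul_eq_top])
    (Eventually.of_forall fun θ => hφs _ (circleMap_mem_sphere' c R θ)) hφ.def' hψφ.def'

lemma log_norm_le_circleAverage (hf : AnalyticOnNhd ℂ f (closedBall c |R|)) (hfc : f c ≠ 0) :
    Real.log ‖f c‖ ≤ Real.circleAverage (fun z => Real.log ‖f z‖) c R := by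
  rcases eq_or_ne R 0 with rfl | hR
  · simp
  rw [hf.circleAverage_log_norm hR hfc, le_add_iff_nonneg_left]
  refine finsum_nonneg fun z => ?_
  by_cases hz : z ∈ closedBall c |R|
  · have hord : 0 ≤ MeromorphicOn.divisor f (closedBall c |R|) z :=
      MeromorphicOn.AnalyticOnNhd.divisor_nonneg hf z
    have hlog : 0 ≤ Real.log (R * ‖c - z‖⁻¹) := by
      rcases eq_or_ne c z with rfl | hcz
      · simp
      rw [← Real.log_abs, abs_mul, abs_inv, abs_norm, ← dist_eq_norm, dist_comm]
      refine Real.log_nonneg ((le_mul_inv_iff₀ (dist_pos.2 hcz.symm)).2 ?_)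
      rwa [one_mul]
    positivity
  · simp [Function.locallyFinsuppWithin.apply_eq_zero_of_notMem _ hz]

lemma circleIntegrable_norm_rpow (hf : ContinuousOn f (sphere c |R|)) (hp : 0 ≤ p) :
    CircleIntegrable (fun z => ‖f z‖ ^ p) c R :=
  (hf.norm.rpow_const fun _ _ => Or.inr hp).circleIntegrable'

lemma norm_rpow_le_circleAverage (hf : AnalyticOnNhd ℂ f (closedBall c |R|)) (hp : 0 < p) :
    ‖f c‖ ^ p ≤ Real.circleAverage (fun z => ‖f z‖ ^ p) c R := by
  rcases eq_or_ne R 0 with rfl | hR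
  · simp
  rcases eq_or_ne (f c) 0 with hfc | hfc
  · simpa [hfc, hp.ne'] using Real.circleAverage_nonneg_of_nonneg fun z _ => by positivity
  have hsub : sphere c |R| ⊆ closedBall c |R| := sphere_subset_closedBall
  have hne : ∀ᶠ z in codiscreteWithin (sphere c |R|), f z ≠ 0 :=
    codiscreteWithin_mono hsub <| hf.preimage_zero_mem_codiscreteWithin hfc
      (mem_closedBall_self (abs_nonneg R)) ((convex_closedBall c |R|).isConnected (by simp))
  have hexp : (fun z => ‖f z‖ ^ p) =ᶠ[codiscreteWithin (sphere c |R|)]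
      fun z => Real.exp (p * Real.log ‖f z‖) := by
    filter_upwards [hne] with z hz
    rw [Real.rpow_def_of_pos (norm_pos_iff.2 hz), mul_comm]
  have hlog : CircleIntegrable (fun z => Real.log ‖f z‖) c R :=
    MeromorphicOn.circleIntegrable_log_norm fun z hz => (hf z (hsub hz)).meromorphicAt
  calc ‖f c‖ ^ p
      = Real.exp (p * Real.log ‖f c‖) := by
        rw [Real.rpow_def_of_pos (norm_pos_iff.2 hfc), mul_comm]
    _ ≤ Real.exp (p * Real.circleAverage (fun z => Real.log ‖f z‖) c R) := by
        gcongr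
        exact log_norm_le_circleAverage hf hfc
    _ = Real.exp (Real.circleAverage (fun z => p * Real.log ‖f z‖) c R) := by
        simp only [← smul_eq_mul, Real.circleAverage_fun_smul]
    _ ≤ Real.circleAverage (fun z => Real.exp (p * Real.log ‖f z‖)) c R :=
        map_circleAverage_le_of_convexOn convexOn_exp Real.continuous_exp.continuousOn isClosed_univ
          (fun _ _ => Set.mem_univ _) (hlog.const_smul (a := p))
          ((circleIntegrable_norm_rpow (hf.continuousOn.mono hsub) hp.le).congr_codiscreteWithin
            hexp)
    _ = Real.circleAverage (fun z => ‖f z‖ ^ p) c R :=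
        Real.circleAverage_congr_codiscreteWithin hexp.symm hR

lemma enorm_rpow_le_laverage_circleMap (hf : AnalyticOnNhd ℂ f (closedBall c |R|)) (hp : 0 < p) :
    ‖f c‖ₑ ^ p ≤ ⨍⁻ θ in Set.Ioc 0 (2 * π), ‖f (circleMap c R θ)‖ₑ ^ p ∂volume := by
  have henorm : ∀ z, ENNReal.ofReal (‖f z‖ ^ p) = ‖f z‖ₑ ^ p := fun z => by
    rw [← ENNReal.ofReal_rpow_of_nonneg (norm_nonneg _) hp.le, ofReal_norm]
  have hint : IntegrableOn (fun θ => ‖f (circleMap c R θ)‖ ^ p) (Set.Ioc 0 (2 * π)) :=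
    (intervalIntegrable_iff_integrableOn_Ioc_of_le Real.two_pi_pos.le).1
      (circleIntegrable_norm_rpow (hf.continuousOn.mono sphere_subset_closedBall) hp.le)
  calc ‖f c‖ₑ ^ p
      = ENNReal.ofReal (‖f c‖ ^ p) := (henorm c).symm
    _ ≤ ENNReal.ofReal (Real.circleAverage (fun z => ‖f z‖ ^ p) c R) :=
        ENNReal.ofReal_le_ofReal (norm_rpow_le_circleAverage hf hp)
    _ = ENNReal.ofReal (⨍ θ in Set.Ioc 0 (2 * π), ‖f (circleMap c R θ)‖ ^ p) := by
        rw [Real.circleAverage_eq_intervalAverage, Set.uIoc_of_le Real.two_pi_pos.le]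
    _ = ⨍⁻ θ in Set.Ioc 0 (2 * π), ‖f (circleMap c R θ)‖ₑ ^ p ∂volume := by
        rw [ofReal_setAverage hint (Eventually.of_forall fun _ => by positivity), setLAverage_eq]
        simp only [henorm]

end CircleAverage

lemma isPreconnected_of_balanced {𝕜 E : Type*} [RCLike 𝕜] [AddCommGroup E] [Module 𝕜 E]
    [TopologicalSpace E] [ContinuousSMul 𝕜 E] {U : Set E} (hU : Balanced 𝕜 U) :
    IsPreconnected U := by
  refine isPreconnected_of_forall 0 fun x hx =>
    ⟨(fun z : 𝕜 => z • x) '' closedBall 0 1, ?_, ⟨0, by simp⟩, ⟨1, by simp⟩, ?_⟩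
  · rintro _ ⟨z, hz, rfl⟩
    exact hU.smul_mem (mem_closedBall_zero_iff.1 hz) hx
  · have hdisc : IsPreconnected (closedBall (0 : 𝕜) 1) :=
      (isConnected_closedBall zero_le_one).isPreconnected
    exact hdisc.image _ (by fun_prop)

lemma eqOn_of_ae_norm_eq {E F : Type*} [NormedAddCommGroup E] [NormedSpace ℂ E]
    [MeasurableSpace E] {μ : Measure E} [μ.IsOpenPosMeasure]
    [NormedAddCommGroup F] [NormedSpace ℂ F] [StrictConvexSpace ℝ F]
    {g : E → F} {U : Set E} {x₀ : E} {r : ℝ}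
    (hU : IsOpen U) (hUc : IsPreconnected U) (hg : DifferentiableOn ℂ g U) (hx₀ : x₀ ∈ U)
    (hgr : ∀ᵐ x ∂μ.restrict U, ‖g x‖ = r) : Set.EqOn g (Function.const E (g x₀)) U := by
  have hnorm : Set.EqOn (‖g ·‖) (fun _ => r) U :=
    Measure.eqOn_open_of_ae_eq hgr hU hg.continuousOn.norm continuousOn_const
  exact eqOn_of_isPreconnected_of_isMaxOn_norm hUc hU hg hx₀ fun x hx =>
    ((hnorm hx).trans (hnorm hx₀).symm).le

section CircleInvariance

open scoped Real Pointwise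

variable {E : Type*} [NormedAddCommGroup E] [NormedSpace ℂ E] [MeasurableSpace E] [BorelSpace E]
  {μ : Measure E}

lemma smulInvariantMeasure_circle_of_isAddHaarMeasure [ProperSpace E] (μ : Measure E)
    [μ.IsAddHaarMeasure] : SMulInvariantMeasure Circle E μ where
  measure_preimage_smul a s _ := by
    have hball : a⁻¹ • ball (0 : E) 1 = ball 0 1 :=
      (balanced_ball_zero (𝕜 := ℂ)).smul_eq (Circle.norm_coe a⁻¹)
    have hchar : distribHaarChar E a⁻¹ = 1 :=
      distribHaarChar_eq_of_measure_smul_eq_mul (measure_ball_pos μ 0 one_pos).ne'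
        measure_ball_lt_top.ne (by rw [ENNReal.coe_one, one_mul]; exact congrArg μ hball)
    rw [Set.preimage_smul, ← distribHaarChar_mul μ a⁻¹ s, hchar, ENNReal.coe_one, one_mul]

lemma smulInvariantMeasure_circle_restrict [SMulInvariantMeasure Circle E μ]
    {U : Set E} (hU : MeasurableSet U) (hUb : Balanced ℂ U) :
    SMulInvariantMeasure Circle E (μ.restrict U) where
  measure_preimage_smul a s hs := by
    have hUa : (a • ·) ⁻¹' U = U := by
      rw [Set.preimage_smul]
      exact hUb.smul_eq (Circle.norm_coe a⁻¹)
    have := (measurePreserving_smul a μ).restrict_preimage hU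
    rw [hUa] at this
    exact this.measure_preimage hs.nullMeasurableSet

lemma lintegral_laverage_circleMap_smul [SFinite μ] [SecondCountableTopology E]
    [SMulInvariantMeasure Circle E μ] {F : E → ℝ≥0∞} (hF : Measurable F) :
    ∫⁻ x, ⨍⁻ θ in Set.Ioc 0 (2 * π), F (circleMap 0 1 θ • x) ∂volume ∂μ = ∫⁻ x, F x ∂μ := by
  have hjoint : Measurable fun y : E × ℝ => F (circleMap 0 1 y.2 • y.1) :=
    hF.comp (by fun_prop : Continuous fun y : E × ℝ => circleMap 0 1 y.2 • y.1).measurable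
  have hrot : ∀ θ : ℝ, ∫⁻ x, F (circleMap 0 1 θ • x) ∂μ = ∫⁻ x, F x ∂μ := fun θ => by
    simpa [Circle.smul_def, circleMap] using
      (measurePreserving_smul (Circle.exp θ) μ).lintegral_comp hF
  simp only [laverage_eq']
  rw [lintegral_lintegral_swap hjoint.aemeasurable]
  simp only [hrot, ← laverage_eq']
  exact setLAverage_const (by simp [Real.pi_pos]) measure_Ioc_lt_top.ne _

theorem enorm_rpow_zero_mul_measure_le_setLIntegral [SFinite μ] [SecondCountableTopology E]
    [SMulInvariantMeasure Circle E μ] {g : E → ℂ} {U : Set E} {p : ℝ} (hU : IsOpen U)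
    (hUb : Balanced ℂ U) (hg : DifferentiableOn ℂ g U) (hp : 0 < p) :
    ‖g 0‖ₑ ^ p * μ U ≤ ∫⁻ x in U, ‖g x‖ₑ ^ p ∂μ := by
  classical
  set F : E → ℝ≥0∞ := U.indicator fun x => ‖g x‖ₑ ^ p with hF
  have hF_meas : Measurable F := by
    rw [hF, ← Set.piecewise_eq_indicator]
    exact (ENNReal.continuous_rpow_const.comp_continuousOn
      hg.continuousOn.enorm).measurable_piecewise continuousOn_const hU.measurableSet
  have disc_subset : ∀ x ∈ U, ∀ z ∈ closedBall (0 : ℂ) |1|, z • x ∈ U := fun x hx z hz =>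
    hUb.smul_mem (by simpa using hz) hx
  have submean : ∀ x ∈ U,
      ‖g 0‖ₑ ^ p ≤ ⨍⁻ θ in Set.Ioc 0 (2 * π), F (circleMap 0 1 θ • x) ∂volume := fun x hx => by
    have hslice : AnalyticOnNhd ℂ (fun z : ℂ => g (z • x)) (closedBall 0 |1|) :=
      AnalyticOnNhd.mono
        ((hg.comp (f := fun z : ℂ => z • x) (by fun_prop) fun _ hz => hz).analyticOnNhd
          (hU.preimage (by fun_prop)))
        (disc_subset x hx)
    have hF_slice : ∀ θ, F (circleMap 0 1 θ • x) = ‖g (circleMap 0 1 θ • x)‖ₑ ^ p := fun θ =>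
      Set.indicator_of_mem (disc_subset x hx _ (by simp)) _
    simpa only [hF_slice, zero_smul] using enorm_rpow_le_laverage_circleMap hslice hp
  calc ‖g 0‖ₑ ^ p * μ U
      = ∫⁻ _ in U, ‖g 0‖ₑ ^ p ∂μ := (setLIntegral_const U _).symm
    _ ≤ ∫⁻ x in U, ⨍⁻ θ in Set.Ioc 0 (2 * π), F (circleMap 0 1 θ • x) ∂volume ∂μ :=
        setLIntegral_mono' hU.measurableSet submean
    _ ≤ ∫⁻ x, ⨍⁻ θ in Set.Ioc 0 (2 * π), F (circleMap 0 1 θ • x) ∂volume ∂μ :=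
        setLIntegral_le_lintegral U _
    _ = ∫⁻ x, F x ∂μ := lintegral_laverage_circleMap_smul hF_meas
    _ = ∫⁻ x in U, ‖g x‖ₑ ^ p ∂μ := lintegral_indicator hU.measurableSet _

end CircleInvariance

theorem flatness_rigidity_general {E ι : Type*} [NormedAddCommGroup E] [NormedSpace ℂ E]
    [MeasurableSpace E] [BorelSpace E] [SecondCountableTopology E] [Fintype ι]
    {μ : Measure E} [SMulInvariantMeasure Circle E μ] [μ.IsOpenPosMeasure] {U : Set E}
    (hU : IsOpen U) (hUb : Balanced ℂ U) (hμU : μ U ≠ ∞) {g : E → ℂ}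
    (hg : DifferentiableOn ℂ g U) (hg0 : 1 ≤ ‖g 0‖) {q : ℝ} (hq : 0 < q) {u : ι → E → ℝ≥0∞}
    (hu_meas : ∀ i, AEMeasurable (u i) (μ.restrict U))
    (hbound : ∀ᵐ x ∂μ.restrict U, ‖g x‖ₑ ^ q ≤ ∏ i, u i x)
    (hint : ∀ i, ∫⁻ x in U, u i x ∂μ ≤ μ U) :
    (∀ x ∈ U, g x = g 0) ∧ ∀ i, ∀ᵐ x ∂μ.restrict U, u i x = 1 := by
  rcases U.eq_empty_or_nonempty with rfl | hU_ne
  · simp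
  have : Fact (μ U < ∞) := ⟨hμU.lt_top⟩
  have := smulInvariantMeasure_circle_restrict (μ := μ) hU.measurableSet hUb
  set p : ℝ := q / (Fintype.card ι + 1 : ℕ) with hp_def
  have hp : 0 < p := by positivity
  have hbound_p : ∀ᵐ x ∂μ.restrict U, (‖g x‖ₑ ^ p) ^ (Fintype.card ι + 1) ≤ ∏ i, u i x :=
    hbound.mono fun x hx => by
      rwa [← ENNReal.rpow_mul_natCast, hp_def, div_mul_cancel₀ _ (by positivity)]
  have hg_int : μ U ≤ ∫⁻ x in U, ‖g x‖ₑ ^ p ∂μ := calc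
    μ U = 1 * μ U := (one_mul _).symm
    _ ≤ ‖g 0‖ₑ ^ p * μ U := by
        gcongr
        exact ENNReal.one_le_rpow (by simpa using ENNReal.ofReal_le_ofReal hg0) hp
    _ ≤ ∫⁻ x in U, ‖g x‖ₑ ^ p ∂μ := by
        simpa [Measure.restrict_restrict hU.measurableSet] using
          enorm_rpow_zero_mul_measure_le_setLIntegral (μ := μ.restrict U) hU hUb hg hp
  obtain ⟨hg_eq, hu_eq⟩ := ae_eq_one_of_pow_le_prod hu_meas hbound_p (by simpa using hint)
    (by simpa using hg_int)
  have hg_norm : ∀ᵐ x ∂μ.restrict U, ‖g x‖ = 1 := hg_eq.mono fun x hx => by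
    have henorm : ‖g x‖ₑ = 1 := ENNReal.rpow_left_injective hp.ne' (by simpa using hx)
    simpa using congrArg ENNReal.toReal henorm
  exact ⟨eqOn_of_ae_norm_eq hU (isPreconnected_of_balanced hUb) hg (hUb.zero_mem hU_ne) hg_norm,
    hu_eq⟩

/-- Let `B ⊆ ℂⁿ` be the open unit ball, `g : B → ℂ` holomorphic with
`|g(0)| = 1`, `r ≥ 1`, and let `u₁, …, u_r : B → [0,+∞]` be measurable functions with
`|g|² ≤ u₁ ⋯ u_r` almost everywhere on `B` and `∫_B u_i dλ ≤ λ(B)` for each `i`. Then `g`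
is constant with `|g| ≡ 1` on `B`, and each `u_i = 1` almost everywhere on `B`. -/
theorem flatness_rigidity {n r : ℕ} (hr : 1 ≤ r)
    (g : EuclideanSpace ℂ (Fin n) → ℂ)
    (hg : DifferentiableOn ℂ g (ball 0 1)) (hg0 : ‖g 0‖ = 1)
    (u : Fin r → EuclideanSpace ℂ (Fin n) → ℝ≥0∞)
    (hu_meas : ∀ i, AEMeasurable (u i) (volume.restrict (ball 0 1)))
    (hbound : ∀ᵐ x ∂(volume.restrict (ball (0 : EuclideanSpace ℂ (Fin n)) 1)),
      ENNReal.ofReal (‖g x‖ ^ 2) ≤ ∏ i, u i x)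
    (hint : ∀ i, ∫⁻ x in ball (0 : EuclideanSpace ℂ (Fin n)) 1, u i x ≤
      volume (ball (0 : EuclideanSpace ℂ (Fin n)) 1)) :
    (∀ x ∈ ball (0 : EuclideanSpace ℂ (Fin n)) 1, g x = g 0) ∧
    ∀ i, ∀ᵐ x ∂(volume.restrict (ball (0 : EuclideanSpace ℂ (Fin n)) 1)), u i x = 1 := by
  have : SMulInvariantMeasure Circle (EuclideanSpace ℂ (Fin n)) volume :=
    smulInvariantMeasure_circle_of_isAddHaarMeasure volume
  exact flatness_rigidity_general isOpen_ball balanced_ball_zero measure_ball_lt_top.ne hg hg0.ge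
    two_pos hu_meas (by simpa [ENNReal.ofReal_pow] using hbound) hint
end
end
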